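/- (Corollary of Theorems 1 and 2: 2-FWL has stronger link discriminating power than 1-WL.) (i) For every label set Σ, all labeled graphs G = (V,E,l) and G' = (V',E',l') over Σ, and all target links (p,q) in G and (p',q') in G': if (p,q) and (p',q') are 2-FWL-indistinguishable, then they are 1-WL-indistinguishable. (ii) There exist unlabeled graphs G, G' and target links (p,q) in G and (p',q') in G' that are 1-WL-indistinguishable but not 2-FWL-indistinguishable. -/

import Mathlib

open scoped Classical

universe u v

/-- The common 1-WL color type over label set `σ`:
`C 0 = σ`, `C (t+1) = C t × Multiset (C t)`. -/
def WL1Color (σ : Type u) : ℕ → Type u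
  | 0 => σ
  | t + 1 => WL1Color σ t × Multiset (WL1Color σ t)

/-- The 1-WL coloring of a labeled graph `(G, l)`:
`c¹⁰(v) = l v`, `c¹ᵗ⁺¹(v) = (c¹ᵗ(v), {{c¹ᵗ(u) : u ∈ N(v)}})`. -/
noncomputable def wl1 {σ : Type u} {V : Type v} [Fintype V] (G : SimpleGraph V)
    (l : V → σ) : (t : ℕ) → V → WL1Color σ t
  | 0 => l
  | t + 1 => fun v => (wl1 G l t v, (G.neighborFinset v).val.map (wl1 G l t))

/-- The type of initial pair colors over label set `σ`. -/
def PairColor0 (σ : Type u) : Type u := σ × σ × Bool × Bool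

/-- Initial pair color `c⁰(p,q) = (l p, l q, 1_{(p,q)∈E}, 1_{p=q})`. -/
noncomputable def pairInit {σ : Type u} {V : Type v} (G : SimpleGraph V) (l : V → σ)
    (e : V × V) : PairColor0 σ :=
  (l e.1, l e.2, decide (G.Adj e.1 e.2), decide (e.1 = e.2))

/-- The common (plain/local) 2-WL pair color type over label set `σ`. -/
def WL2Color (σ : Type u) : ℕ → Type u
  | 0 => PairColor0 σ
  | t + 1 => WL2Color σ t × Multiset (WL2Color σ t) × Multiset (WL2Color σ t)

/-- The plain 2-WL coloring:
`c₂ᵗ⁺¹(p,q) = (c₂ᵗ(p,q), {{c₂ᵗ(u,q) : u ∈ V}}, {{c₂ᵗ(p,v) : v ∈ V}})`. -/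
noncomputable def wl2 {σ : Type u} {V : Type v} [Fintype V] (G : SimpleGraph V)
    (l : V → σ) : (t : ℕ) → V × V → WL2Color σ t
  | 0 => pairInit G l
  | t + 1 => fun e =>
      (wl2 G l t e,
        Finset.univ.val.map (fun u => wl2 G l t (u, e.2)),
        Finset.univ.val.map (fun v => wl2 G l t (e.1, v)))

/-- The local 2-WL (2-WL_L) coloring:
`cₗᵗ⁺¹(p,q) = (cₗᵗ(p,q), {{cₗᵗ(u,q) : (u,q) ∈ E}}, {{cₗᵗ(p,v) : (p,v) ∈ E}})`. -/
noncomputable def wl2L {σ : Type u} {V : Type v} [Fintype V] (G : SimpleGraph V)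
    (l : V → σ) : (t : ℕ) → V × V → WL2Color σ t
  | 0 => pairInit G l
  | t + 1 => fun e =>
      (wl2L G l t e,
        (Finset.univ.filter (fun u => G.Adj u e.2)).val.map (fun u => wl2L G l t (u, e.2)),
        (Finset.univ.filter (fun v => G.Adj e.1 v)).val.map (fun v => wl2L G l t (e.1, v)))

/-- The common (plain/local) 2-FWL pair color type over label set `σ`. -/
def FWLColor (σ : Type u) : ℕ → Type u
  | 0 => PairColor0 σ
  | t + 1 => FWLColor σ t × Multiset (FWLColor σ t × FWLColor σ t)

/-- The 2-FWL coloring: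
`c_Fᵗ⁺¹(p,q) = (c_Fᵗ(p,q), {{(c_Fᵗ(u,q), c_Fᵗ(p,u)) : u ∈ V}})`. -/
noncomputable def fwl2 {σ : Type u} {V : Type v} [Fintype V] (G : SimpleGraph V)
    (l : V → σ) : (t : ℕ) → V × V → FWLColor σ t
  | 0 => pairInit G l
  | t + 1 => fun e =>
      (fwl2 G l t e,
        Finset.univ.val.map (fun u => (fwl2 G l t (u, e.2), fwl2 G l t (e.1, u))))

/-- The local 2-FWL (2-FWL_L) coloring:
`c_FLᵗ⁺¹(p,q) = (c_FLᵗ(p,q), {{(c_FLᵗ(u,q), c_FLᵗ(p,u)) : (u,q) ∈ E or (p,u) ∈ E}})`. -/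
noncomputable def fwl2L {σ : Type u} {V : Type v} [Fintype V] (G : SimpleGraph V)
    (l : V → σ) : (t : ℕ) → V × V → FWLColor σ t
  | 0 => pairInit G l
  | t + 1 => fun e =>
      (fwl2L G l t e,
        (Finset.univ.filter (fun u => G.Adj u e.2 ∨ G.Adj e.1 u)).val.map
          (fun u => (fwl2L G l t (u, e.2), fwl2L G l t (e.1, u))))

/-- A target link: an ordered pair of distinct, non-adjacent vertices. -/
def IsTargetLink {V : Type v} (G : SimpleGraph V) (e : V × V) : Prop :=
  e.1 ≠ e.2 ∧ ¬ G.Adj e.1 e.2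

/-- `(p,q)` in `(G,l)` and `(p',q')` in `(G',l')` are 1-WL-indistinguishable. -/
noncomputable def WL1Indist {σ : Type u} {V V' : Type v} [Fintype V] [Fintype V']
    (G : SimpleGraph V) (l : V → σ) (G' : SimpleGraph V') (l' : V' → σ)
    (e : V × V) (e' : V' × V') : Prop :=
  ∀ t : ℕ, wl1 G l t e.1 = wl1 G' l' t e'.1 ∧ wl1 G l t e.2 = wl1 G' l' t e'.2

/-- 2-WL-indistinguishability. -/
noncomputable def WL2Indist {σ : Type u} {V V' : Type v} [Fintype V] [Fintype V']
    (G : SimpleGraph V) (l : V → σ) (G' : SimpleGraph V') (l' : V' → σ)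
    (e : V × V) (e' : V' × V') : Prop :=
  ∀ t : ℕ, wl2 G l t e = wl2 G' l' t e'

/-- Local 2-WL (2-WL_L) indistinguishability. -/
noncomputable def WL2LIndist {σ : Type u} {V V' : Type v} [Fintype V] [Fintype V']
    (G : SimpleGraph V) (l : V → σ) (G' : SimpleGraph V') (l' : V' → σ)
    (e : V × V) (e' : V' × V') : Prop :=
  ∀ t : ℕ, wl2L G l t e = wl2L G' l' t e'

/-- 2-FWL-indistinguishability. -/
noncomputable def FWL2Indist {σ : Type u} {V V' : Type v} [Fintype V] [Fintype V']
    (G : SimpleGraph V) (l : V → σ) (G' : SimpleGraph V') (l' : V' → σ)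
    (e : V × V) (e' : V' × V') : Prop :=
  ∀ t : ℕ, fwl2 G l t e = fwl2 G' l' t e'

/-- Local 2-FWL (2-FWL_L) indistinguishability. -/
noncomputable def FWL2LIndist {σ : Type u} {V V' : Type v} [Fintype V] [Fintype V']
    (G : SimpleGraph V) (l : V → σ) (G' : SimpleGraph V') (l' : V' → σ)
    (e : V × V) (e' : V' × V') : Prop :=
  ∀ t : ℕ, fwl2L G l t e = fwl2L G' l' t e'

/-- The 0/1 labeling trick: augment the labeling with indicator of membership in `{p, q}`. -/
noncomputable def label01 {σ : Type u} {V : Type v} (l : V → σ) (e : V × V) :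
    V → σ × Bool :=
  fun v => (l v, decide (v = e.1 ∨ v = e.2))

/-- 1-WL-with-0/1-labeling indistinguishability of target links. -/
noncomputable def WL1LabelIndist {σ : Type u} {V V' : Type v} [Fintype V] [Fintype V']
    (G : SimpleGraph V) (l : V → σ) (G' : SimpleGraph V') (l' : V' → σ)
    (e : V × V) (e' : V' × V') : Prop :=
  WL1Indist G (label01 l e) G' (label01 l' e') e e'

/-- The number of common neighbors of `p` and `q` in `G`. -/
noncomputable def commonNbrCount {V : Type v} [Fintype V] (G : SimpleGraph V)
    (e : V × V) : ℕ :=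
  (G.neighborFinset e.1 ∩ G.neighborFinset e.2).card

/-- The edge indicator stored in a 2-FWL pair color. -/
def FWLColor.adj {σ : Type u} : (t : ℕ) → FWLColor σ t → Bool
  | 0, c => c.2.2.1
  | t + 1, c => FWLColor.adj t c.1

/-- The pair of endpoint 1-WL colors determined by a 2-FWL pair color. -/
def FWLColor.endpoints {σ : Type u} : (t : ℕ) → FWLColor σ t → WL1Color σ t × WL1Color σ t
  | 0, c => (c.1, c.2.1)
  | t + 1, c =>
      (((FWLColor.endpoints t c.1).1,
          (c.2.filter (fun x => FWLColor.adj t x.2 = true)).map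
            (fun x => (FWLColor.endpoints t x.2).2)),
        ((FWLColor.endpoints t c.1).2,
          (c.2.filter (fun x => FWLColor.adj t x.1 = true)).map
            (fun x => (FWLColor.endpoints t x.1).1)))

section

variable {σ : Type u} {V : Type v} [Fintype V] (G : SimpleGraph V) (l : V → σ)

lemma adj_fwl2 (t : ℕ) (e : V × V) :
    FWLColor.adj t (fwl2 G l t e) = decide (G.Adj e.1 e.2) := by
  induction t with
  | zero => rfl
  | succ t ih => exact ih

lemma endpoints_fwl2 (t : ℕ) (e : V × V) :
    FWLColor.endpoints t (fwl2 G l t e) = (wl1 G l t e.1, wl1 G l t e.2) := by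
  induction t generalizing e with
  | zero => rfl
  | succ t ih =>
    simp only [FWLColor.endpoints, fwl2, wl1, ih, Multiset.filter_map, Multiset.map_map,
      Function.comp_def, adj_fwl2, decide_eq_true_eq, SimpleGraph.neighborFinset_eq_filter,
      Finset.filter_val, G.adj_comm _ e.2]

lemma wl1_eq_of_fwl2_eq {V' : Type v} [Fintype V'] {G' : SimpleGraph V'} {l' : V' → σ}
    {e : V × V} {e' : V' × V'} {t : ℕ} (h : fwl2 G l t e = fwl2 G' l' t e') :
    wl1 G l t e.1 = wl1 G' l' t e'.1 ∧ wl1 G l t e.2 = wl1 G' l' t e'.2 := by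
  rw [← Prod.mk_inj, ← endpoints_fwl2, ← endpoints_fwl2, h]

lemma exists_common_neighbor_of_fwl2_eq {V' : Type v} [Fintype V'] {G' : SimpleGraph V'}
    {l' : V' → σ} {e : V × V} {e' : V' × V'} (h : fwl2 G l 1 e = fwl2 G' l' 1 e')
    {w : V} (hpw : G.Adj e.1 w) (hwq : G.Adj w e.2) :
    ∃ u, G'.Adj e'.1 u ∧ G'.Adj u e'.2 := by
  have hmem : (fwl2 G l 0 (w, e.2), fwl2 G l 0 (e.1, w)) ∈ (fwl2 G l 1 e).2 :=
    Multiset.mem_map_of_mem _ (Finset.mem_univ w)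
  rw [h] at hmem
  obtain ⟨u, -, hu⟩ := Multiset.mem_map.1 hmem
  obtain ⟨huq, hpu⟩ := Prod.mk_inj.1 hu
  have huq := congrArg (FWLColor.adj 0) huq
  have hpu := congrArg (FWLColor.adj 0) hpu
  simp only [adj_fwl2, hpw, hwq, decide_true, decide_eq_true_eq] at huq hpu
  exact ⟨u, hpu, huq⟩

/-- 1-WL cannot separate vertices of an unlabeled regular graph. -/
lemma wl1_const_of_isRegularOfDegree [G.LocallyFinite] {d : ℕ} (hG : G.IsRegularOfDegree d)
    (a : σ) (t : ℕ) (v w : V) : wl1 G (fun _ => a) t v = wl1 G (fun _ => a) t w := by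
  induction t generalizing v w with
  | zero => rfl
  | succ t ih =>
    have hmap (x : V) {_ : Fintype (G.neighborSet x)} :
        (G.neighborFinset x).val.map (wl1 G (fun _ => a) t) =
          Multiset.replicate d (wl1 G (fun _ => a) t v) := by
      rw [Multiset.map_congr rfl fun y _ => ih y v, Multiset.map_const', Finset.card_val,
        SimpleGraph.card_neighborFinset_eq_degree, ← hG x]
      congr!
    exact Prod.ext (ih v w) ((hmap v).trans (hmap w).symm)

end

/-- Corollary of Theorems 1 and 2: 2-FWL has stronger link discriminating power than 1-WL. -/
theorem fwl2_stronger_than_wl1 :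
    (∀ (σ : Type u) (V V' : Type v) [Fintype V] [Fintype V']
        (G : SimpleGraph V) (l : V → σ) (G' : SimpleGraph V') (l' : V' → σ)
        (e : V × V) (e' : V' × V'),
        IsTargetLink G e → IsTargetLink G' e' →
        FWL2Indist G l G' l' e e' → WL1Indist G l G' l' e e') ∧
    (∃ (n n' : ℕ) (G : SimpleGraph (Fin n)) (G' : SimpleGraph (Fin n'))
        (e : Fin n × Fin n) (e' : Fin n' × Fin n'),
        IsTargetLink G e ∧ IsTargetLink G' e' ∧
        WL1Indist G (fun _ => ()) G' (fun _ => ()) e e' ∧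
        ¬ FWL2Indist G (fun _ => ()) G' (fun _ => ()) e e') := by
  refine ⟨fun σ V V' _ _ G l G' l' e e' _ _ h t => wl1_eq_of_fwl2_eq G l (h t), ?_⟩
  have hreg : (SimpleGraph.cycleGraph 6).IsRegularOfDegree 2 :=
    fun _ => SimpleGraph.cycleGraph_degree_three_le
  have hadj (v w : Fin 6) : (SimpleGraph.cycleGraph 6).Adj v w ↔ v - w = 1 ∨ w - v = 1 :=
    SimpleGraph.cycleGraph_adj
  refine ⟨6, 6, .cycleGraph 6, .cycleGraph 6, (0, 2), (0, 3), ?_, ?_,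
    fun t => ⟨rfl, wl1_const_of_isRegularOfDegree _ hreg () t 2 3⟩, fun h => ?_⟩
  · simp only [IsTargetLink, hadj]
    decide
  · simp only [IsTargetLink, hadj]
    decide
  · obtain ⟨u, hu⟩ := exists_common_neighbor_of_fwl2_eq _ _ (h 1) (w := 1)
      ((hadj 0 1).2 (by decide)) ((hadj 1 2).2 (by decide))
    simp only [hadj] at hu
    revert u
    decide
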